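/- arXiv:1607.08283 — 2 statements merged into one kernel-verified Lean document; each statement's English description precedes it below -/
import Mathlib

section
/- Let ρ : ℤ^n → ℂ be a function and let T_ρ(t) = ∑_{0 ≤ x_1 ≤ t_1} … ∑_{0 ≤ x_n ≤ t_n} ρ(x). Then for any n-times continuously differentiable function f : ℝ^n → ℂ and any N = (N_1,…,N_n) with N_i positive integers, one has ∑_{0 ≤ x_i ≤ N_i (1≤i≤n)} f(x) ρ(x) = ∑_{ε ∈ {0,1}^n} ( ∏_{1≤i≤n} (−1)^{ε_i} N_i^{ε_i − 1} ) ∫_{[0,N_1]} … ∫_{[0,N_n]} ∂^ε f( N_{ε̄} + t_ε ) · T_ρ( N_{ε̄} + t_ε ) dt_n … dt_1, where ∂^ε f = ∂^{ε_1+…+ε_n} f / (∂x_1^{ε_1} … ∂x_n^{ε_n}), N_{ε̄} is the vector whose i-th coordinate equals N_i if ε_i = 0 and 0 if ε_i = 1, and t_ε is the vector whose i-th coordinate equals 0 if ε_i = 0 and t_i if ε_i = 1. -/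
/-!
On an interval, the fundamental theorem of calculus writes a value `φ c` with `c ∈ [a, b]` as
`∫_a^b ((b - a)⁻¹ φ b - 1_{s ≥ c} φ' s) ds`. Applying this in each coordinate and expanding the
product, one choice `ε i` per coordinate, writes `f c` as a sum over `ε ∈ {0,1}ⁿ` of integrals of
`∂^ε f` against `1_{≥ c}`, evaluated at the points `b_ε̄ + t_ε`. Multiplying by `ρ c` and summing
over the lattice points `c` of the box turns the weights `1_{≥ c}` into the partial sums `T_ρ`.
-/

open scoped BigOperators
open MeasureTheory

noncomputable section

/-- The mixed partial derivative `∂^ε f` of `f : ℝ^n → ℂ`, taken once in each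
coordinate direction `i` with `ε i = true`. -/
def mixedPartial {n : ℕ} (ε : Fin n → Bool) (f : (Fin n → ℝ) → ℂ) : (Fin n → ℝ) → ℂ :=
  (List.finRange n).foldr
    (fun i g => if ε i then (fun x => fderiv ℝ g x (Pi.single i 1)) else g) f

/-- `T_ρ(t) = ∑_{0 ≤ x_1 ≤ t_1} ⋯ ∑_{0 ≤ x_n ≤ t_n} ρ(x)`. -/
def Trho {n : ℕ} (ρ : (Fin n → ℤ) → ℂ) (t : Fin n → ℝ) : ℂ :=
  ∑ x ∈ Finset.Icc (0 : Fin n → ℤ) (fun i => ⌊t i⌋), ρ x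

section IteratedDirDeriv

variable {𝕜 E F G : Type*} [NontriviallyNormedField 𝕜] [NormedAddCommGroup E] [NormedSpace 𝕜 E]
  [NormedAddCommGroup F] [NormedSpace 𝕜 F] [NormedAddCommGroup G] [NormedSpace 𝕜 G]

variable (𝕜) in
/-- The iterated directional derivative `∂_{v₁} ⋯ ∂_{vₖ} f` along the list `[v₁, …, vₖ]`, the last
vector being applied first. -/
def iteratedDirDeriv (l : List E) (f : E → F) : E → F :=
  l.foldr (fun v g x => fderiv 𝕜 g x v) f

@[simp]
theorem iteratedDirDeriv_nil (f : E → F) : iteratedDirDeriv 𝕜 [] f = f := rfl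

@[simp]
theorem iteratedDirDeriv_cons (v : E) (l : List E) (f : E → F) :
    iteratedDirDeriv 𝕜 (v :: l) f = fun x => fderiv 𝕜 (iteratedDirDeriv 𝕜 l f) x v := rfl

theorem contDiff_iteratedDirDeriv {l : List E} {f : E → F} {k : ℕ}
    (hf : ContDiff 𝕜 (k + l.length : ℕ) f) : ContDiff 𝕜 k (iteratedDirDeriv 𝕜 l f) := by
  induction l generalizing k with
  | nil => exact hf
  | cons v l ih =>
    have hl : ContDiff 𝕜 (k + 1 : ℕ) (iteratedDirDeriv 𝕜 l f) :=
      ih (by rwa [add_assoc, add_comm 1, ← List.length_cons])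
    exact (hl.fderiv_right (m := k) (by norm_cast)).clm_apply contDiff_const

theorem iteratedDirDeriv_comp {l : List E} {f : F → G} {g : E → F} {g' : E →L[𝕜] F}
    (hf : ContDiff 𝕜 l.length f) (hg : ∀ x, HasFDerivAt g g' x) :
    iteratedDirDeriv 𝕜 l (f ∘ g) = iteratedDirDeriv 𝕜 (l.map g') f ∘ g := by
  induction l with
  | nil => rfl
  | cons v l ih =>
    have hdiff : Differentiable 𝕜 (iteratedDirDeriv 𝕜 (l.map g') f) :=
      (contDiff_iteratedDirDeriv (k := 1) (by simpa [add_comm] using hf)).differentiable (by simp)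
    funext x
    have hcomp := (hdiff (g x)).hasFDerivAt.comp x (hg x)
    simp [ih (hf.of_le (by simp)), hcomp.fderiv]

end IteratedDirDeriv

section ActiveDirections

variable {n : ℕ}

/-- The standard basis vectors `e_i` with `ε i = true`, in increasing order of `i`: the directions
in which `∂^ε` differentiates. -/
def activeDirections (ε : Fin n → Bool) : List (Fin n → ℝ) :=
  ((List.finRange n).filter ε).map fun i => Pi.single i 1

theorem length_activeDirections_le (ε : Fin n → Bool) : (activeDirections ε).length ≤ n := by
  simpa [activeDirections] using List.length_filter_le ε (List.finRange n)

theorem mixedPartial_eq_iteratedDirDeriv (ε : Fin n → Bool) (f : (Fin n → ℝ) → ℂ) :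
    mixedPartial ε f = iteratedDirDeriv ℝ (activeDirections ε) f := by
  simp [mixedPartial, iteratedDirDeriv, activeDirections, List.foldr_map, List.foldr_filter]

variable (n) in
/-- The inclusion `y ↦ (0, y)` of `ℝⁿ` in `ℝⁿ⁺¹`. -/
def zeroCons : (Fin n → ℝ) →L[ℝ] Fin (n + 1) → ℝ where
  toFun y := Fin.cons 0 y
  map_add' y z := by refine funext (Fin.cases ?_ fun j => ?_) <;> simp
  map_smul' r y := by refine funext (Fin.cases ?_ fun j => ?_) <;> simp
  cont := by fun_prop

theorem zeroCons_single (i : Fin n) (r : ℝ) :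
    zeroCons n (Pi.single i r) = Pi.single i.succ r := by
  refine funext (Fin.cases ?_ fun j => ?_) <;> simp [zeroCons, Pi.single_apply]

theorem finCons_eq_single_add_zeroCons (s : ℝ) (y : Fin n → ℝ) :
    (Fin.cons s y : Fin (n + 1) → ℝ) = Pi.single 0 s + zeroCons n y := by
  refine funext (Fin.cases ?_ fun j => ?_) <;> simp [zeroCons]

theorem hasFDerivAt_finCons_right (s : ℝ) (y : Fin n → ℝ) :
    HasFDerivAt (fun y : Fin n → ℝ => (Fin.cons s y : Fin (n + 1) → ℝ)) (zeroCons n) y := by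
  simp only [finCons_eq_single_add_zeroCons]
  exact (zeroCons n).hasFDerivAt.const_add _

theorem contDiff_finCons_right {k : WithTop ℕ∞} (s : ℝ) :
    ContDiff ℝ k fun y : Fin n → ℝ => (Fin.cons s y : Fin (n + 1) → ℝ) := by
  simp only [finCons_eq_single_add_zeroCons]
  exact contDiff_const.add (zeroCons n).contDiff

theorem hasDerivAt_finCons_left (s : ℝ) (y : Fin n → ℝ) :
    HasDerivAt (fun s : ℝ => (Fin.cons s y : Fin (n + 1) → ℝ)) (Pi.single 0 1) s := by
  refine hasDerivAt_pi.2 (Fin.cases ?_ fun j => ?_)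
  · simpa using! hasDerivAt_id' s
  · simpa using hasDerivAt_const s (y j)

theorem activeDirections_cons (δ : Bool) (ε : Fin n → Bool) :
    activeDirections (Fin.cons δ ε : Fin (n + 1) → Bool) =
      (if δ then [Pi.single 0 1] else []) ++ (activeDirections ε).map (zeroCons n) := by
  have hcomp : (Fin.cons δ ε : Fin (n + 1) → Bool) ∘ Fin.succ = ε := rfl
  cases δ <;>
    simp [activeDirections, List.finRange_succ, List.filter_map, hcomp, zeroCons_single]

end ActiveDirections

section MixedPoint

/-- The point `b_ε̄ + t_ε`, whose coordinates are those of `t` where `ε` holds and those of `b`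
elsewhere. -/
abbrev mixedPoint {ι α : Type*} (ε : ι → Bool) (b t : ι → α) : ι → α :=
  fun i => if ε i then t i else b i

theorem continuous_mixedPoint {ι α : Type*} [TopologicalSpace α] (ε : ι → Bool) (b : ι → α) :
    Continuous (mixedPoint ε b) := by
  refine continuous_pi fun i => ?_
  unfold mixedPoint
  split_ifs <;> fun_prop

theorem mixedPoint_cons {n : ℕ} {α : Type*} (δ : Bool) (ε : Fin n → Bool) (b : Fin (n + 1) → α)
    (s : α) (y : Fin n → α) :
    mixedPoint (Fin.cons δ ε : Fin (n + 1) → Bool) b (Fin.cons s y : Fin (n + 1) → α) =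
      (Fin.cons (if δ then s else b 0) (mixedPoint ε (Fin.tail b) y) : Fin (n + 1) → α) := by
  refine funext (Fin.cases ?_ fun j => ?_) <;> simp [mixedPoint, Fin.tail]

theorem mixedPoint_le {ι α : Type*} [Preorder α] {ε : ι → Bool} {b t : ι → α} (h : t ≤ b) :
    mixedPoint ε b t ≤ b := by
  intro i
  unfold mixedPoint
  split_ifs
  exacts [h i, le_rfl]

end MixedPoint

section Integral

variable {E : Type*} [NormedAddCommGroup E]

theorem indicator_Ici_finCons {n : ℕ} {α M : Type*} [Preorder α] [Zero M] (c : Fin (n + 1) → α)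
    (g : (Fin (n + 1) → α) → M) (s : α) (y : Fin n → α) :
    (Set.Ici c).indicator g (Fin.cons s y) = (Set.Ici (Fin.tail c)).indicator
      (fun z : Fin n → α => (Set.Ici (c 0)).indicator (fun r => g (Fin.cons r z)) s) y := by
  classical
  simp only [Set.indicator_apply, Set.mem_Ici, Pi.le_def, Fin.forall_fin_succ, Fin.cons_zero,
    Fin.cons_succ, Fin.tail]
  split_ifs <;> tauto

theorem integrableOn_indicator_Ici_mixedPoint {ι : Type*} [Fintype ι] (ε : ι → Bool)
    (a b c : ι → ℝ) {g : (ι → ℝ) → E} (hg : Continuous g) :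
    IntegrableOn (fun t => (Set.Ici c).indicator g (mixedPoint ε b t)) (Set.Icc a b) :=
  (hg.comp (continuous_mixedPoint ε b)).integrableOn_Icc.indicator
    ((continuous_mixedPoint ε b).measurable measurableSet_Ici)

variable [NormedSpace ℝ E]

theorem setIntegral_Icc_finCons {n : ℕ} {a b : Fin (n + 1) → ℝ} {g : (Fin (n + 1) → ℝ) → E}
    (hg : IntegrableOn g (Set.Icc a b)) :
    ∫ t in Set.Icc a b, g t =
      ∫ y in Set.Icc (Fin.tail a) (Fin.tail b), ∫ s in Set.Icc (a 0) (b 0), g (Fin.cons s y) := by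
  let e := (MeasurableEquiv.piFinSuccAbove (fun _ : Fin (n + 1) => ℝ) 0).symm
  have he : MeasurePreserving e :=
    (volume_preserving_piFinSuccAbove (fun _ : Fin (n + 1) => ℝ) 0).symm _
  have hpre : e ⁻¹' Set.Icc a b = Set.Icc (a 0) (b 0) ×ˢ Set.Icc (Fin.tail a) (Fin.tail b) :=
    ((Fin.insertNthOrderIso (fun _ => ℝ) 0).preimage_Icc a b).trans (Set.Icc_prod_eq _ _)
  have hint := (he.integrableOn_comp_preimage e.measurableEmbedding).2 hg
  rw [hpre, Measure.volume_eq_prod] at hint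
  rw [← he.setIntegral_preimage_emb e.measurableEmbedding, hpre, Measure.volume_eq_prod,
    ← Measure.prod_restrict]
  refine (integral_prod_symm _ ?_).trans ?_
  · rwa [Measure.prod_restrict]
  · simp [e, MeasurableEquiv.piFinSuccAbove, Fin.consEquiv]

variable [CompleteSpace E]

theorem integral_inv_smul_sub_indicator_deriv {φ φ' : ℝ → E} {a b c : ℝ} (hab : a < b)
    (hc : c ∈ Set.Icc a b) (hφ : ∀ s ∈ Set.Icc c b, HasDerivAt φ (φ' s) s)
    (hφ' : IntegrableOn φ' (Set.Icc c b)) :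
    ∫ s in Set.Icc a b, ((b - a)⁻¹ • φ b - (Set.Ici c).indicator φ' s) = φ c := by
  have hinter : Set.Icc a b ∩ Set.Ici c = Set.Icc c b := by
    rw [← Set.Ici_inter_Iic, Set.inter_right_comm, Set.Ici_inter_Ici, sup_eq_right.2 hc.1,
      Set.Ici_inter_Iic]
  have hint : IntegrableOn ((Set.Ici c).indicator φ') (Set.Icc a b) := by
    rwa [IntegrableOn, integrable_indicator_iff measurableSet_Ici, IntegrableOn,
      Measure.restrict_restrict measurableSet_Ici, Set.inter_comm, hinter]
  have hftc : ∫ s in Set.Icc c b, φ' s = φ b - φ c := by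
    rw [integral_Icc_eq_integral_Ioc, ← intervalIntegral.integral_of_le hc.2]
    exact intervalIntegral.integral_eq_sub_of_hasDerivAt (by rwa [Set.uIcc_of_le hc.2])
      ((intervalIntegrable_iff_integrableOn_Icc_of_le hc.2).2 hφ')
  rw [integral_sub (integrable_const _) hint, setIntegral_indicator measurableSet_Ici, hinter, hftc]
  simp [hab.le, smul_smul, mul_inv_cancel₀ (sub_pos.2 hab).ne']

/-- Integrating out the first coordinate merges the two terms that differ only in `ε 0`. -/
theorem inv_smul_integral_sub_integral_fderiv {n : ℕ} (ε : Fin n → Bool)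
    {g : (Fin (n + 1) → ℝ) → E} (hg : ContDiff ℝ 1 g) {a b c : Fin (n + 1) → ℝ}
    (hab : a 0 < b 0) (hc : c 0 ∈ Set.Icc (a 0) (b 0)) :
    (b 0 - a 0)⁻¹ • (∫ t in Set.Icc a b, (Set.Ici c).indicator g
        (mixedPoint (Fin.cons false ε : Fin (n + 1) → Bool) b t)) -
      ∫ t in Set.Icc a b, (Set.Ici c).indicator (fun x => fderiv ℝ g x (Pi.single 0 1))
        (mixedPoint (Fin.cons true ε : Fin (n + 1) → Bool) b t) =
      ∫ y in Set.Icc (Fin.tail a) (Fin.tail b), (Set.Ici (Fin.tail c)).indicator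
        (fun z : Fin n → ℝ => g (Fin.cons (c 0) z)) (mixedPoint ε (Fin.tail b) y) := by
  have hg' : Continuous fun x => fderiv ℝ g x (Pi.single 0 1) :=
    (hg.continuous_fderiv one_ne_zero).clm_apply continuous_const
  have hint : IntegrableOn (fun t => (b 0 - a 0)⁻¹ • (Set.Ici c).indicator g
      (mixedPoint (Fin.cons false ε : Fin (n + 1) → Bool) b t)) (Set.Icc a b) :=
    (integrableOn_indicator_Ici_mixedPoint _ a b c hg.continuous).smul _
  have hint' := integrableOn_indicator_Ici_mixedPoint
    (Fin.cons true ε : Fin (n + 1) → Bool) a b c hg'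
  rw [← integral_smul, ← integral_sub hint hint']
  refine (setIntegral_Icc_finCons (hint.sub hint')).trans ?_
  refine setIntegral_congr_fun measurableSet_Icc fun y _ => ?_
  simp only [Pi.sub_apply, mixedPoint_cons, indicator_Ici_finCons, if_true,
    Bool.false_eq_true, if_false]
  by_cases hy : mixedPoint ε (Fin.tail b) y ∈ Set.Ici (Fin.tail c)
  · have hderiv (s : ℝ) := (hg.differentiable one_ne_zero _).hasFDerivAt.comp_hasDerivAt s
      (hasDerivAt_finCons_left s (mixedPoint ε (Fin.tail b) y))
    simp only [Set.indicator_of_mem hy, Set.indicator_of_mem (Set.mem_Ici.2 hc.2)]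
    exact integral_inv_smul_sub_indicator_deriv hab hc (fun s _ => hderiv s)
      (hg'.comp (by fun_prop)).integrableOn_Icc
  · simp [Set.indicator_of_notMem hy]

theorem sum_smul_integral_iteratedDirDeriv_eq {n : ℕ} {f : (Fin n → ℝ) → E} (hf : ContDiff ℝ n f)
    {a b c : Fin n → ℝ} (hab : ∀ i, a i < b i) (hc : c ∈ Set.Icc a b) :
    ∑ ε : Fin n → Bool, (∏ i, if ε i then (-1 : ℝ) else (b i - a i)⁻¹) •
      ∫ t in Set.Icc a b, (Set.Ici c).indicator (iteratedDirDeriv ℝ (activeDirections ε) f)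
        (mixedPoint ε b t) = f c := by
  induction n with
  | zero =>
    have hIcc : Set.Icc a b = Set.univ := Set.Nonempty.eq_univ ⟨c, hc⟩
    have hval (ε : Fin 0 → Bool) (t : Fin 0 → ℝ) : (Set.Ici c).indicator
        (iteratedDirDeriv ℝ (activeDirections ε) f) (mixedPoint ε b t) = f c := by
      rw [Subsingleton.elim (mixedPoint ε b t) c]
      simp [activeDirections]
    simp only [hval, hIcc]
    simp [measureReal_def, volume_pi]
  | succ n ih =>
    have hslice : ContDiff ℝ n fun z : Fin n → ℝ => f (Fin.cons (c 0) z) :=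
      (hf.of_le (by simp)).comp (contDiff_finCons_right (c 0))
    have hsum := ih hslice (a := Fin.tail a) (b := Fin.tail b) (c := Fin.tail c)
      (fun i => hab i.succ) ⟨fun i => hc.1 i.succ, fun i => hc.2 i.succ⟩
    rw [Fin.cons_self_tail] at hsum
    rw [← hsum, ← (Fin.consEquiv fun _ : Fin (n + 1) => Bool).sum_comp, Fintype.sum_prod_type_right]
    refine Finset.sum_congr rfl fun ε _ => ?_
    have hlen : (activeDirections ε).length ≤ n := length_activeDirections_le ε
    have hg : ContDiff ℝ 1 (iteratedDirDeriv ℝ ((activeDirections ε).map (zeroCons n)) f) :=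
      contDiff_iteratedDirDeriv (k := 1)
        (hf.of_le (by rw [List.length_map]; exact_mod_cast (by omega)))
    have hchain := iteratedDirDeriv_comp (l := activeDirections ε) (f := f)
      (hf.of_le (by exact_mod_cast hlen.trans n.le_succ)) (hasFDerivAt_finCons_right (c 0))
    simp only [Function.comp_def] at hchain
    rw [hchain, ← inv_smul_integral_sub_integral_fderiv ε hg (hab 0) ⟨hc.1 0, hc.2 0⟩,
      Fintype.sum_bool]
    simp only [Fin.consEquiv, Equiv.coe_fn_mk, activeDirections_cons, Fin.prod_univ_succ,
      Fin.cons_zero, Fin.cons_succ, Fin.tail, if_true, Bool.false_eq_true, if_false,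
      List.nil_append, List.singleton_append, iteratedDirDeriv_cons]
    module

end Integral

theorem sum_smul_indicator_Ici_eq_Trho_smul {n : ℕ} {E : Type*} [AddCommGroup E] [Module ℂ E]
    (ρ : (Fin n → ℤ) → ℂ) (g : (Fin n → ℝ) → E) {p b : Fin n → ℝ} (hpb : p ≤ b) :
    ∑ x ∈ Finset.Icc (0 : Fin n → ℤ) (fun i => ⌊b i⌋),
      ρ x • (Set.Ici fun i => (x i : ℝ)).indicator g p = Trho ρ p • g p := by
  classical
  have hfilter : Finset.Icc (0 : Fin n → ℤ) (fun i => ⌊p i⌋) =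
      {x ∈ Finset.Icc (0 : Fin n → ℤ) (fun i => ⌊b i⌋) | (fun i => (x i : ℝ)) ≤ p} := by
    ext x
    simp only [Finset.mem_Icc, Finset.mem_filter, Pi.le_def, Int.le_floor, and_assoc]
    exact and_congr_right fun _ => ⟨fun h => ⟨fun i => (h i).trans (hpb i), h⟩, And.right⟩
  simp only [Trho, Finset.sum_smul, hfilter, Finset.sum_filter, Set.indicator_apply, Set.mem_Ici,
    ite_smul, zero_smul, smul_ite, smul_zero]

theorem multidimensional_partial_summation_general {n : ℕ} {E : Type*} [NormedAddCommGroup E]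
    [NormedSpace ℂ E] [CompleteSpace E] (ρ : (Fin n → ℤ) → ℂ) {f : (Fin n → ℝ) → E}
    (hf : ContDiff ℝ n f) {N : Fin n → ℝ} (hN : ∀ i, 0 < N i) :
    ∑ x ∈ Finset.Icc (0 : Fin n → ℤ) (fun i => ⌊N i⌋), ρ x • f (fun i => (x i : ℝ)) =
      ∑ ε : Fin n → Bool, (∏ i, if ε i then (-1 : ℝ) else (N i)⁻¹) •
        ∫ t in Set.Icc 0 N, Trho ρ (mixedPoint ε N t) •
          iteratedDirDeriv ℝ (activeDirections ε) f (mixedPoint ε N t) := by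
  have hpoint : ∀ x ∈ Finset.Icc (0 : Fin n → ℤ) (fun i => ⌊N i⌋),
      (fun i => (x i : ℝ)) ∈ Set.Icc 0 N := fun x hx =>
    ⟨fun i => Int.cast_nonneg ((Finset.mem_Icc.1 hx).1 i),
      fun i => Int.le_floor.1 ((Finset.mem_Icc.1 hx).2 i)⟩
  have hcont (ε : Fin n → Bool) : Continuous (iteratedDirDeriv ℝ (activeDirections ε) f) :=
    (contDiff_iteratedDirDeriv (k := 0)
      (hf.of_le (by simpa using length_activeDirections_le ε))).continuous
  rw [Finset.sum_congr rfl fun x hx => by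
    rw [← sum_smul_integral_iteratedDirDeriv_eq (a := 0) hf hN (hpoint x hx), Finset.smul_sum],
    Finset.sum_comm]
  refine Finset.sum_congr rfl fun ε _ => ?_
  simp only [Pi.zero_apply, sub_zero, smul_comm (ρ _) (∏ _, (_ : ℝ)), ← Finset.smul_sum]
  congr 1
  simp only [← integral_smul]
  refine (integral_finsetSum _ fun x _ =>
    (integrableOn_indicator_Ici_mixedPoint ε 0 N _ (hcont ε)).smul (ρ x)).symm.trans ?_
  exact setIntegral_congr_fun measurableSet_Icc fun t ht =>
    sum_smul_indicator_Ici_eq_Trho_smul ρ _ (mixedPoint_le ht.2)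

/-- **Lemma (multidimensional partial summation).** For `ε ∈ {0,1}^n`, the point
`N_ε̄ + t_ε` has `i`-th coordinate `t i` if `ε i = 1` and `N i` if `ε i = 0`. -/
theorem multidimensional_partial_summation
    (n : ℕ) (ρ : (Fin n → ℤ) → ℂ) (f : (Fin n → ℝ) → ℂ) (hf : ContDiff ℝ n f)
    (N : Fin n → ℕ) (hN : ∀ i, 0 < N i) :
    ∑ x ∈ Finset.Icc (0 : Fin n → ℤ) (fun i => (N i : ℤ)),
        f (fun i => (x i : ℝ)) * ρ x =
      ∑ ε : Fin n → Bool,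
        (∏ i, if ε i then (-1 : ℂ) else (((N i : ℝ) : ℂ))⁻¹) *
          ∫ t in Set.Icc (0 : Fin n → ℝ) (fun i => (N i : ℝ)),
            mixedPartial ε f (fun i => if ε i then t i else (N i : ℝ)) *
              Trho ρ (fun i => if ε i then t i else (N i : ℝ)) := by
  simpa [mixedPartial_eq_iteratedDirDeriv, mul_comm, apply_ite Complex.ofReal] using
    multidimensional_partial_summation_general ρ hf fun i => Nat.cast_pos.2 (hN i)

end
end

section
/- Let M be an invertible r × r matrix with rational entries and let ε₀ > 0. Suppose γ = (γ_1,…,γ_r) ∈ ℝ^r is such that there exist integers a_1,…,a_r and q_1,…,q_r with gcd(a_j, q_j) = 1, 0 < q_j ≤ P^{C'} and |γ_j − a_j/q_j| ≤ P^{C'−1} for each 1 ≤ j ≤ r, where C' > 0. Then, provided P is sufficiently large with respect to M, r, C' and ε₀, the vector α = M^{-1} γ admits a simultaneous rational approximation with common denominator: there exist q' ∈ ℕ and integers a'_1,…,a'_r such that q' ≤ P^{rC' + ε₀} and |α_j − a'_j/q'| ≤ P^{rC' + ε₀ − 1} for each 1 ≤ j ≤ r. -/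
open scoped BigOperators
open Matrix

noncomputable section

/-!
Let `D` clear the denominators of a rational matrix `N`. If `βⱼ = aⱼ / qⱼ`, then every coordinate
of `N β` has denominator dividing `D ∏ qⱼ`, and `N γ - N β` is bounded by the entries of `N` times
the errors `|γⱼ - βⱼ|`. Both `D` and the entries of `N` are constants, so for large `P` any
increase of the exponent of `P` absorbs them. For `N = M⁻¹` with `M` of size `r`, the exponents
`∑ⱼ C' = r C'` and `C' - 1 ≤ r C' - 1` both have room `ε₀`.
-/

open Filter Asymptotics IsLocalization

section

variable {m n : Type*} [Fintype n]

lemma matrix_map_inv {K L : Type*} [Field K] [Field L] [DecidableEq n] (f : K →+* L)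
    (M : Matrix n n K) : M⁻¹.map f = (M.map f)⁻¹ := by
  simp only [← RingHom.mapMatrix_apply, Matrix.inv_def, ← RingHom.map_det, ← RingHom.map_adjugate,
    Ring.inverse_eq_inv', ← map_inv₀]
  ext i j
  simp

lemma abs_mulVec_sub_mulVec_le {R : Type*} [CommRing R] [LinearOrder R] [IsStrictOrderedRing R]
    (N : Matrix m n R) {x y δ : n → R} (h : ∀ j, |x j - y j| ≤ δ j) (i : m) :
    |(N *ᵥ x) i - (N *ᵥ y) i| ≤ ∑ j, |N i j| * δ j :=
  calc |(N *ᵥ x) i - (N *ᵥ y) i| = |∑ j, N i j * (x j - y j)| := by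
        simp only [mulVec, dotProduct, mul_sub, Finset.sum_sub_distrib]
    _ ≤ ∑ j, |N i j * (x j - y j)| := Finset.abs_sum_le_sum_abs _ _
    _ ≤ ∑ j, |N i j| * δ j := by
        simp only [abs_mul]
        gcongr with j
        exact h j

lemma isInteger_smul_mulVec {R S : Type*} [CommSemiring R] [CommSemiring S] [Algebra R S]
    {N : Matrix m n S} {x : n → S} {D : R} {q : n → R} (hN : ∀ i j, IsInteger R (D • N i j))
    (hx : ∀ j, IsInteger R (q j • x j)) (i : m) :
    IsInteger R ((D * ∏ j, q j) • (N *ᵥ x) i) := by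
  classical
  rw [mulVec, dotProduct, Finset.smul_sum]
  refine sum_mem fun j _ => ?_
  have hterm : (D * ∏ k, q k) • (N i j * x j) =
      (∏ k ∈ Finset.univ.erase j, q k) • ((D • N i j) * (q j • x j)) := by
    rw [← Finset.mul_prod_erase _ q (Finset.mem_univ j), smul_mul_smul_comm, smul_smul]
    ring_nf
  rw [hterm]
  exact isInteger_smul (isInteger_mul (hN i j) (hx j))

lemma exists_mulVec_div_eq_div [Finite m] (N : Matrix m n ℚ) (K : Type*) [Field K] [CharZero K] :
    ∃ D : ℤ, 0 < D ∧ ∀ a q : n → ℤ, (∀ j, q j ≠ 0) → ∃ a' : m → ℤ, ∀ i,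
      (N.map ((↑) : ℚ → K) *ᵥ fun j => (a j : K) / q j) i = a' i / (D * ∏ j, q j : ℤ) := by
  obtain ⟨⟨D, (hD : 0 < D)⟩, hDN⟩ :=
    exist_integer_multiples_of_finite (Submonoid.pos ℤ) fun p : m × n => N p.1 p.2
  refine ⟨D, hD, fun a q hq => ?_⟩
  have hN : ∀ i j, IsInteger ℤ (D • N.map ((↑) : ℚ → K) i j) := fun i j => by
    obtain ⟨z, hz⟩ := hDN (i, j)
    exact ⟨z, by simpa using congrArg ((↑) : ℚ → K) hz⟩
  have hx : ∀ j, IsInteger ℤ (q j • ((a j : K) / q j)) := fun j =>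
    ⟨a j, by simp [mul_div_cancel₀, hq j]⟩
  choose a' ha' using isInteger_smul_mulVec hN hx
  refine ⟨a', fun i => ?_⟩
  have hDq : D * ∏ j, q j ≠ 0 := mul_ne_zero hD.ne' (Finset.prod_ne_zero_iff.2 fun j _ => hq j)
  rw [eq_div_iff (Int.cast_ne_zero.2 hDq), mul_comm, ← zsmul_eq_mul]
  exact (ha' i).symm

end

lemma isLittleO_rpow_rpow_atTop {a b : ℝ} (h : a < b) :
    (fun x : ℝ => x ^ a) =o[atTop] fun x => x ^ b := by
  have hlim : Tendsto (fun x : ℝ => x ^ a / x ^ b) atTop (nhds 0) := by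
    refine (tendsto_rpow_neg_atTop (sub_pos.2 h)).congr' ?_
    filter_upwards [eventually_gt_atTop 0] with x hx
    rw [neg_sub, Real.rpow_sub hx]
  refine (isLittleO_iff_tendsto' ?_).2 hlim
  filter_upwards [eventually_gt_atTop 0] with x hx hxb
  exact absurd hxb (Real.rpow_pos_of_pos hx b).ne'

lemma eventually_sum_mul_rpow_le_rpow {ι : Type*} [Fintype ι] (c : ι → ℝ) {b : ι → ℝ} {t : ℝ}
    (h : ∀ i, b i < t) : ∀ᶠ x : ℝ in atTop, ∑ i, c i * x ^ b i ≤ x ^ t := by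
  have hsum : (fun x : ℝ => ∑ i, c i * x ^ b i) =o[atTop] fun x => x ^ t :=
    IsLittleO.fun_sum fun i _ => (isLittleO_rpow_rpow_atTop (h i)).const_mul_left (c i)
  filter_upwards [hsum.eventuallyLE, eventually_ge_atTop 0] with x hx hx0
  exact (le_abs_self _).trans (hx.trans_eq (Real.norm_of_nonneg (Real.rpow_nonneg hx0 t)))

theorem rational_approx_invertible_matrix_general {m n : Type*} [Finite m] [Fintype n]
    (N : Matrix m n ℚ) {c b : n → ℝ} {s t : ℝ} (hs : ∑ j, c j < s) (ht : ∀ j, b j < t) :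
    ∀ᶠ P : ℝ in atTop, ∀ γ : n → ℝ,
      (∀ j, ∃ a q : ℤ, 0 < q ∧ (q : ℝ) ≤ P ^ c j ∧ |γ j - (a : ℝ) / (q : ℝ)| ≤ P ^ b j) →
      ∃ q' : ℕ, 0 < q' ∧ (q' : ℝ) ≤ P ^ s ∧
        ∃ a' : m → ℤ, ∀ i, |(N.map ((↑) : ℚ → ℝ) *ᵥ γ) i - (a' i : ℝ) / (q' : ℝ)| ≤ P ^ t := by
  obtain ⟨D, hD, hDN⟩ := exists_mulVec_div_eq_div N ℝ
  have hden : ∀ᶠ P : ℝ in atTop, D * P ^ ∑ j, c j ≤ P ^ s := by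
    simpa using eventually_sum_mul_rpow_le_rpow (fun _ : Unit => (D : ℝ)) fun _ => hs
  have herr : ∀ᶠ P : ℝ in atTop, ∀ i, ∑ j, |(N i j : ℝ)| * P ^ b j ≤ P ^ t :=
    eventually_all.2 fun i => eventually_sum_mul_rpow_le_rpow _ ht
  filter_upwards [hden, herr, eventually_gt_atTop 0] with P hPden hPerr hP γ hγ
  choose a q hq hqP hγq using hγ
  obtain ⟨a', ha'⟩ := hDN a q fun j => (hq j).ne'
  have hDq : 0 < D * ∏ j, q j := mul_pos hD (Finset.prod_pos fun j _ => hq j)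
  lift D * ∏ j, q j to ℕ using hDq.le with q' hq'
  refine ⟨q', by exact_mod_cast hDq, ?_, a', fun i => ?_⟩
  · calc (q' : ℝ) = D * ∏ j, (q j : ℝ) := by exact_mod_cast hq'
      _ ≤ D * ∏ j, P ^ c j := by
        gcongr with j
        · exact fun j _ => by exact_mod_cast (hq j).le
        · exact hqP j
      _ = D * P ^ ∑ j, c j := by rw [Real.rpow_sum_of_pos hP]
      _ ≤ P ^ s := hPden
  · have himage : (N.map ((↑) : ℚ → ℝ) *ᵥ fun j => (a j : ℝ) / q j) i = a' i / q' := by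
      exact_mod_cast ha' i
    rw [← himage]
    exact (abs_mulVec_sub_mulVec_le _ hγq i).trans (hPerr i)

/-- **Lemma (simultaneous rational approximation under an invertible rational linear
change of coordinates).** -/
theorem rational_approx_invertible_matrix
    (r : ℕ) (M : Matrix (Fin r) (Fin r) ℚ) (hM : IsUnit M.det)
    (C' : ℝ) (hC' : 0 < C') (ε₀ : ℝ) (hε₀ : 0 < ε₀) :
    ∃ P₀ : ℝ, ∀ P : ℝ, P₀ ≤ P → ∀ γ : Fin r → ℝ,
      (∀ j : Fin r, ∃ a : ℤ, ∃ q : ℤ, Int.gcd a q = 1 ∧ 0 < q ∧ (q : ℝ) ≤ P ^ C' ∧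
        |γ j - (a : ℝ) / (q : ℝ)| ≤ P ^ (C' - 1)) →
      ∃ q' : ℕ, 0 < q' ∧ (q' : ℝ) ≤ P ^ ((r : ℝ) * C' + ε₀) ∧
        ∃ a' : Fin r → ℤ, ∀ j : Fin r,
          |((M.map ((↑) : ℚ → ℝ))⁻¹ *ᵥ γ) j - (a' j : ℝ) / (q' : ℝ)| ≤
            P ^ ((r : ℝ) * C' + ε₀ - 1) := by
  have hs : ∑ _j : Fin r, C' < r * C' + ε₀ := by simpa using hε₀
  have ht (j : Fin r) : C' - 1 < r * C' + ε₀ - 1 := by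
    have hr : (1 : ℝ) ≤ r := by exact_mod_cast j.pos
    nlinarith
  rw [← Rat.coe_castHom, ← matrix_map_inv]
  obtain ⟨P₀, hP₀⟩ := eventually_atTop.1 (rational_approx_invertible_matrix_general M⁻¹ hs ht)
  exact ⟨P₀, fun P hP γ hγ => hP₀ P hP γ fun j => (hγ j).imp fun a ⟨q, _, h⟩ => ⟨q, h⟩⟩

end
end
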